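/- Let d ≥ 1, let p be a real number with p ≥ √d, and set λ = p/√d. Let W_1^{(λ)}, …, W_d^{(λ)} be i.i.d. nonnegative random variables, each distributed as W/λ where W has tail P(W ≥ t²) = e^{-t/14} for all t ≥ 0. Then ‖Σ_{j=1}^d W_j^{(λ)}‖_p ≤ 91190 √d · p. -/

import Mathlib

open MeasureTheory ProbabilityTheory Finset
open scoped ENNReal

/-- The `L^p` norm `‖Z‖_p = (E[|Z|^p])^{1/p}` of a real random variable,
for a real exponent `p`. -/
noncomputable def lpNormR {Ω : Type*} [MeasurableSpace Ω] (μ : Measure Ω) (p : ℝ)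
    (Z : Ω → ℝ) : ℝ≥0∞ :=
  (∫⁻ ω, ENNReal.ofReal (|Z ω| ^ p) ∂μ) ^ (1 / p)

lemma aux_pointwise (p x : ℝ) (hp : 0 < p) (hx : 0 ≤ x) :
    (1 + (x / (6 * p)) ^ 2) ^ p ≤ 1 + 1 / (2 * p) * Real.exp (x / 2) := by
  set u := x / (6 * p) with hu
  have hu0 : 0 ≤ u := by positivity
  have hxu : x = 6 * p * u := by rw [hu]; field_simp
  have h1 : 1 + u ^ 2 ≤ Real.exp u := by
    have := Real.sum_le_exp_of_nonneg hu0 4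
    simp [Finset.sum_range_succ, Nat.factorial] at this
    nlinarith [mul_nonneg hu0 (sq_nonneg (u - 3 / 2))]
  have hpos : 0 < 1 + u ^ 2 := by positivity
  have hlog1 : Real.log (1 + u ^ 2) ≤ u := by
    rw [Real.log_le_iff_le_exp hpos]; exact h1
  have hlog2 : Real.log (1 + u ^ 2) ≤ u ^ 2 := by
    have := Real.log_le_sub_one_of_pos hpos; linarith
  have hlog0 : 0 ≤ Real.log (1 + u ^ 2) := Real.log_nonneg (by nlinarith)
  rw [Real.rpow_def_of_pos hpos]
  set y := Real.log (1 + u ^ 2) * p with hy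
  have hy0 : 0 ≤ y := by positivity
  have e1 : Real.exp y ≤ 1 + y * Real.exp y := by
    have h := Real.add_one_le_exp (-y)
    have h2 : Real.exp (-y) * Real.exp y = 1 := by rw [← Real.exp_add]; simp
    nlinarith [Real.exp_pos y]
  have e2 : Real.exp y ≤ Real.exp (x / 6) := by
    apply Real.exp_le_exp.2
    rw [hxu, hy]; nlinarith
  have e3 : y ≤ p * u ^ 2 := by rw [hy]; nlinarith
  have e4 : x ^ 2 ≤ 18 * Real.exp (x / 3) := by
    have := Real.quadratic_le_exp_of_nonneg (x := x / 3) (by positivity)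
    nlinarith
  have e5 : p * u ^ 2 = x ^ 2 / (36 * p) := by rw [hxu]; field_simp; norm_num
  have e6 : Real.exp (x / 2) = Real.exp (x / 3) * Real.exp (x / 6) := by
    rw [← Real.exp_add]; congr 1; ring
  calc Real.exp y ≤ 1 + y * Real.exp y := e1
    _ ≤ 1 + (p * u ^ 2) * Real.exp (x / 6) := by gcongr
    _ = 1 + x ^ 2 / (36 * p) * Real.exp (x / 6) := by rw [e5]
    _ ≤ 1 + (18 * Real.exp (x / 3)) / (36 * p) * Real.exp (x / 6) := by gcongr
    _ = _ := by rw [e6]; field_simp; ring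

lemma aux_expmoment {Ω : Type*} [MeasurableSpace Ω] (μ : Measure Ω) [IsProbabilityMeasure μ]
    (X : Ω → ℝ) (hX : Measurable X) (h0 : ∀ ω, 0 ≤ X ω)
    (ht : ∀ t : ℝ, 0 ≤ t → μ {ω | t ≤ X ω} = ENNReal.ofReal (Real.exp (-t))) :
    ∫⁻ ω, ENNReal.ofReal (Real.exp (X ω / 2)) ∂μ = 2 := by
  have key := lintegral_comp_eq_lintegral_meas_le_mul (g := fun t => 1 / 2 * Real.exp (t / 2)) μ
    (Filter.Eventually.of_forall h0) hX.aemeasurable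
    (fun t _ => (by fun_prop : Continuous fun t : ℝ => 1 / 2 * Real.exp (t / 2)).intervalIntegrable 0 t)
    (Filter.Eventually.of_forall fun t => by positivity)
  have hint : ∀ b : ℝ, ∫ t in (0:ℝ)..b, 1 / 2 * Real.exp (t / 2) = Real.exp (b / 2) - 1 := by
    intro b
    rw [intervalIntegral.integral_eq_sub_of_hasDerivAt (f := fun t => Real.exp (t / 2))]
    · simp
    · intro t _
      have := ((hasDerivAt_id t).div_const 2).exp
      simpa [mul_comm] using this
    · exact (by fun_prop : Continuous fun t : ℝ => 1 / 2 * Real.exp (t / 2)).intervalIntegrable 0 b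
  simp_rw [hint] at key
  have hR : ∫⁻ t in Set.Ioi (0:ℝ), μ {a : Ω | t ≤ X a} * ENNReal.ofReal (1 / 2 * Real.exp (t / 2))
      = 1 := by
    have : ∫⁻ t in Set.Ioi (0:ℝ), μ {a : Ω | t ≤ X a} * ENNReal.ofReal (1 / 2 * Real.exp (t / 2))
      = ∫⁻ t in Set.Ioi (0:ℝ), ENNReal.ofReal (1 / 2 * Real.exp ((-1 / 2) * t)) := by
      refine setLIntegral_congr_fun measurableSet_Ioi fun t htt => ?_
      rw [ht t (le_of_lt htt), ← ENNReal.ofReal_mul (Real.exp_pos _).le]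
      congr 1
      rw [mul_left_comm, ← Real.exp_add]
      congr 2; ring
    rw [this, ← ofReal_integral_eq_lintegral_ofReal]
    · rw [integral_const_mul, integral_exp_mul_Ioi (by norm_num)]
      norm_num
    · exact (integrableOn_exp_mul_Ioi (by norm_num) 0).const_mul _
    · exact Filter.Eventually.of_forall fun t => by positivity
  rw [hR] at key
  have hs : ∀ ω, ENNReal.ofReal (Real.exp (X ω / 2)) =
      ENNReal.ofReal (Real.exp (X ω / 2) - 1) + 1 := by
    intro ω
    have : 1 ≤ Real.exp (X ω / 2) := Real.one_le_exp (by linarith [h0 ω])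
    rw [← ENNReal.ofReal_one, ← ENNReal.ofReal_add (by linarith) (by norm_num)]
    congr 1; ring
  simp_rw [hs]
  rw [lintegral_add_right _ measurable_const, key]
  simp; norm_num

lemma aux_sum_le_prod {ι : Type*} (s : Finset ι) (f : ι → ℝ) (hf : ∀ i, 0 ≤ f i) :
    1 + ∑ i ∈ s, f i ≤ ∏ i ∈ s, (1 + f i) := by
  classical
  induction s using Finset.induction_on with
  | empty => simp
  | insert a s ha ih =>
    rw [Finset.sum_insert ha, Finset.prod_insert ha]
    nlinarith [hf a, mul_nonneg (hf a) (Finset.sum_nonneg fun i (_ : i ∈ s) => hf i)]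

/-- Each `W j` is distributed as `W / λ` with `λ = p / √d`, where `W` has tail
`P(W ≥ t²) = e^{-t/14}`; equivalently `λ · W j` has that tail. -/
theorem moment_sum_w_conf {Ω : Type*} [MeasurableSpace Ω]
    (μ : Measure Ω) [IsProbabilityMeasure μ]
    (d : ℕ) (hd : 1 ≤ d)
    (p : ℝ) (hp : Real.sqrt d ≤ p)
    (W : Fin d → Ω → ℝ) (hWmeas : ∀ j, Measurable (W j)) (hWnn : ∀ j ω, 0 ≤ W j ω)
    (hindep : iIndepFun W μ)
    (hWtail : ∀ j, ∀ t : ℝ, 0 ≤ t →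
      μ {ω | t ^ 2 ≤ (p / Real.sqrt d) * W j ω} = ENNReal.ofReal (Real.exp (-t / 14))) :
    lpNormR μ p (fun ω => ∑ j, W j ω) ≤
      ENNReal.ofReal (91190 * Real.sqrt d * p) := by
  have hd1 : (1 : ℝ) ≤ d := by exact_mod_cast hd
  have hs1 : 1 ≤ Real.sqrt d := by rw [Real.one_le_sqrt]; exact hd1
  have hs0 : 0 < Real.sqrt d := by linarith
  have hp0 : 0 < p := by linarith
  have hdp : (d : ℝ) ≤ p * p := by
    have := Real.mul_self_sqrt (show (0:ℝ) ≤ d by linarith)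
    nlinarith
  set T : ℝ := 7056 * Real.sqrt d * p with hT
  have hT0 : 0 < T := by positivity
  -- the exponential variables
  set X : Fin d → Ω → ℝ := fun j ω => Real.sqrt ((p / Real.sqrt d) * W j ω) / 14 with hXdef
  have hXm : ∀ j, Measurable (X j) := fun j => (((hWmeas j).const_mul _).sqrt).div_const _
  have hX0 : ∀ j ω, 0 ≤ X j ω := fun j ω => by positivity
  have hXt : ∀ j, ∀ t : ℝ, 0 ≤ t → μ {ω | t ≤ X j ω} = ENNReal.ofReal (Real.exp (-t)) := by
    intro j t ht
    have h := hWtail j (14 * t) (by positivity)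
    rw [show -(14 * t) / 14 = -t by ring] at h
    rw [← h]
    congr 1
    ext ω
    simp only [Set.mem_ofPred_eq, hXdef]
    rw [le_div_iff₀ (by norm_num), Real.le_sqrt (by positivity), mul_comm t 14]
    exact mul_nonneg (by positivity) (hWnn j ω)
  have hWX : ∀ j ω, W j ω / T = (X j ω / (6 * p)) ^ 2 := by
    intro j ω
    have hnn : 0 ≤ (p / Real.sqrt d) * W j ω := mul_nonneg (by positivity) (hWnn j ω)
    simp only [hXdef]
    rw [div_pow, div_pow, Real.sq_sqrt hnn, hT]
    field_simp
    ring
  set F : ℝ → ℝ≥0∞ := fun w => ENNReal.ofReal ((1 + w / T) ^ p) with hF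
  have hFm : Measurable F := by
    simp only [hF]; fun_prop
  have hEj : ∀ j, ∫⁻ ω, F (W j ω) ∂μ ≤ ENNReal.ofReal (1 + 1 / p) := by
    intro j
    calc ∫⁻ ω, F (W j ω) ∂μ
        ≤ ∫⁻ ω, (1 + ENNReal.ofReal (1 / (2 * p)) * ENNReal.ofReal (Real.exp (X j ω / 2))) ∂μ := by
          refine lintegral_mono fun ω => ?_
          simp only [hF]
          rw [hWX, ← ENNReal.ofReal_mul (by positivity), ← ENNReal.ofReal_one,
            ← ENNReal.ofReal_add (by norm_num) (by positivity)]
          exact ENNReal.ofReal_le_ofReal (aux_pointwise p _ hp0 (hX0 j ω))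
      _ = 1 + ENNReal.ofReal (1 / (2 * p)) * 2 := by
          rw [lintegral_add_left measurable_const, lintegral_const_mul _ (by fun_prop),
            aux_expmoment μ (X j) (hXm j) (hX0 j) (hXt j)]
          simp
      _ = ENNReal.ofReal (1 + 1 / p) := by
          rw [ENNReal.ofReal_add (by norm_num) (by positivity), ENNReal.ofReal_one,
            show (2 : ℝ≥0∞) = ENNReal.ofReal 2 by simp, ← ENNReal.ofReal_mul (by positivity)]
          congr 2
          field_simp
  have hind : iIndepFun (fun j => F ∘ W j) μ := hindep.comp (fun _ => F) (fun _ => hFm)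
  have hprod := lintegral_prod_eq_prod_lintegral_of_indepFun Finset.univ (fun j => F ∘ W j) hind
    (fun j => hFm.comp (hWmeas j))
  have hmain : ∫⁻ ω, ENNReal.ofReal (|∑ j, W j ω| ^ p) ∂μ
      ≤ ENNReal.ofReal ((T * Real.exp 1) ^ p) := by
    calc ∫⁻ ω, ENNReal.ofReal (|∑ j, W j ω| ^ p) ∂μ
        ≤ ∫⁻ ω, ENNReal.ofReal (T ^ p) * ∏ j, (F ∘ W j) ω ∂μ := by
          refine lintegral_mono fun ω => ?_
          have hnn : ∀ j, 0 ≤ W j ω / T := fun j => div_nonneg (hWnn j ω) hT0.le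
          have hS : 0 ≤ ∑ j, W j ω := Finset.sum_nonneg fun j _ => hWnn j ω
          simp only [hF, Function.comp]
          rw [← ENNReal.ofReal_prod_of_nonneg
            (fun j _ => Real.rpow_nonneg (by linarith [hnn j]) _),
            ← ENNReal.ofReal_mul (by positivity),
            Real.finsetProd_rpow _ _ (fun j _ => by linarith [hnn j]),
            ← Real.mul_rpow hT0.le (Finset.prod_nonneg fun j _ => by linarith [hnn j])]
          apply ENNReal.ofReal_le_ofReal
          rw [abs_of_nonneg hS]
          apply Real.rpow_le_rpow hS _ hp0.le
          have := aux_sum_le_prod Finset.univ (fun j => W j ω / T) hnn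
          rw [← Finset.sum_div] at this
          calc ∑ j, W j ω = T * ((∑ j, W j ω) / T) := by field_simp
            _ ≤ _ := by gcongr; linarith
      _ = ENNReal.ofReal (T ^ p) * ∏ j, ∫⁻ ω, F (W j ω) ∂μ := by
          rw [lintegral_const_mul' _ _ ENNReal.ofReal_ne_top, hprod]; rfl
      _ ≤ ENNReal.ofReal (T ^ p) * ∏ j : Fin d, ENNReal.ofReal (1 + 1 / p) := by
          gcongr with j; exact hEj j
      _ = ENNReal.ofReal (T ^ p * (1 + 1 / p) ^ d) := by
          rw [Finset.prod_const, Finset.card_univ, Fintype.card_fin,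
            ← ENNReal.ofReal_pow (by positivity), ← ENNReal.ofReal_mul (by positivity)]
      _ ≤ ENNReal.ofReal ((T * Real.exp 1) ^ p) := by
          apply ENNReal.ofReal_le_ofReal
          rw [Real.mul_rpow hT0.le (Real.exp_pos _).le]
          gcongr
          calc (1 + 1 / p) ^ d ≤ (Real.exp (1 / p)) ^ d := by
                gcongr; linarith [Real.add_one_le_exp (1 / p)]
            _ = Real.exp (d * (1 / p)) := by rw [← Real.exp_nat_mul]
            _ ≤ Real.exp p := by
                apply Real.exp_le_exp.2
                rw [mul_one_div, div_le_iff₀ hp0]; exact hdp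
            _ = Real.exp 1 ^ p := by rw [← Real.exp_mul, one_mul]
  unfold lpNormR
  calc _ ≤ (ENNReal.ofReal ((T * Real.exp 1) ^ p)) ^ (1 / p) :=
        ENNReal.rpow_le_rpow hmain (by positivity)
    _ = ENNReal.ofReal (T * Real.exp 1) := by
        rw [ENNReal.ofReal_rpow_of_nonneg (by positivity) (by positivity),
          ← Real.rpow_mul (by positivity), mul_one_div_cancel hp0.ne', Real.rpow_one]
    _ ≤ _ := by
        apply ENNReal.ofReal_le_ofReal
        have he := Real.exp_one_lt_d9
        have hq : 0 < Real.sqrt d * p := by positivity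
        rw [hT]
        nlinarith
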